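/- For every β ∈ (0,1): g_β(0) = −β² < 0, g_β(1/3) = (2β³+1)/9 > 0, and g_β(1) < 0. Consequently the cubic g_β has exactly three real roots: one in the interval (0,1/3), one in the interval (1/3,1), and one in the interval (1,∞). -/

import Mathlib

/-- The cubic governing the anticlockwise (anti-Shapley) periodic orbit. -/
noncomputable def gAnti (β Z : ℝ) : ℝ :=
  (3*β^3 + 3*β^2 + 3*β)*Z^3 - (5*β^3 + 7*β^2 + 4*β + 2)*Z^2
    + (2*β^3 + 5*β^2 + β + 1)*Z - β^2

/-- A real cubic with three distinct roots factors through them. -/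
theorem cubic_eq_mul_of_roots {a b c d r s t : ℝ} (hrs : r ≠ s) (hrt : r ≠ t) (hst : s ≠ t)
    (hr : a * r ^ 3 + b * r ^ 2 + c * r + d = 0)
    (hs : a * s ^ 3 + b * s ^ 2 + c * s + d = 0)
    (ht : a * t ^ 3 + b * t ^ 2 + c * t + d = 0) (x : ℝ) :
    a * x ^ 3 + b * x ^ 2 + c * x + d = a * ((x - r) * (x - s) * (x - t)) := by
  have h₁ : a * (r ^ 2 + r * s + s ^ 2) + b * (r + s) + c = 0 :=
    mul_left_cancel₀ (sub_ne_zero.mpr hrs) (by linear_combination hr - hs)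
  have h₂ : a * (r ^ 2 + r * t + t ^ 2) + b * (r + t) + c = 0 :=
    mul_left_cancel₀ (sub_ne_zero.mpr hrt) (by linear_combination hr - ht)
  have h₃ : a * (r + s + t) + b = 0 :=
    mul_left_cancel₀ (sub_ne_zero.mpr hst) (by linear_combination h₁ - h₂)
  linear_combination (x - r) * (x - s) * h₃ + (x - r) * h₁ + hr

theorem continuous_gAnti (β : ℝ) : Continuous (gAnti β) := by
  unfold gAnti
  fun_prop

theorem gAnti_zero (β : ℝ) : gAnti β 0 = -β ^ 2 := by
  unfold gAnti
  ring

theorem gAnti_one_third (β : ℝ) : gAnti β (1 / 3) = (2 * β ^ 3 + 1) / 9 := by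
  unfold gAnti
  ring

theorem gAnti_one (β : ℝ) : gAnti β 1 = -1 := by
  unfold gAnti
  ring

theorem gAnti_ten_div_pos {β : ℝ} (h0 : 0 < β) (h1 : β < 1) : 0 < gAnti β (10 / β) := by
  set M := 10 / β with hMdef
  have hβM : β * M = 10 := by rw [hMdef]; field_simp
  have hM : 10 < M := by nlinarith
  have hform : gAnti β M = (28 + 26 * β + 23 * β ^ 2 - 5 * β ^ 3) * M ^ 2
      + (2 * β ^ 3 + 5 * β ^ 2 + β) * M + (M - β ^ 2) := by
    unfold gAnti
    linear_combination (3 * β ^ 2 + 3 * β + 3) * M ^ 2 * hβM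
  have hlead : 0 < 28 + 26 * β + 23 * β ^ 2 - 5 * β ^ 3 := by
    nlinarith [pow_pos h0 2, pow_le_one₀ h0.le h1.le (n := 3)]
  have hconst : 0 < M - β ^ 2 := by nlinarith
  rw [hform]
  positivity

/-- for β ∈ (0,1), g_β(0) = −β² < 0, g_β(1/3) = (2β³+1)/9 > 0 and
g_β(1) < 0; consequently g_β has exactly three real roots, one in (0,1/3), one
in (1/3,1) and one in (1,∞). -/
theorem stmt10 (β : ℝ) (hβ : β ∈ Set.Ioo (0 : ℝ) 1) :
    gAnti β 0 = -β^2 ∧ gAnti β 0 < 0 ∧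
    gAnti β (1/3) = (2*β^3 + 1)/9 ∧ 0 < gAnti β (1/3) ∧
    gAnti β 1 < 0 ∧
    (∃! x : ℝ, x ∈ Set.Ioo (0 : ℝ) (1/3) ∧ gAnti β x = 0) ∧
    (∃! x : ℝ, x ∈ Set.Ioo (1/3 : ℝ) 1 ∧ gAnti β x = 0) ∧
    (∃! x : ℝ, x ∈ Set.Ioi (1 : ℝ) ∧ gAnti β x = 0) ∧
    (∀ x : ℝ, gAnti β x = 0 →
      x ∈ Set.Ioo (0 : ℝ) (1/3) ∪ Set.Ioo (1/3 : ℝ) 1 ∪ Set.Ioi (1 : ℝ)) := by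
  obtain ⟨h0, h1⟩ := hβ
  have hg0 : gAnti β 0 < 0 := by rw [gAnti_zero]; nlinarith [sq_pos_of_pos h0]
  have hg3 : 0 < gAnti β (1/3) := by rw [gAnti_one_third]; positivity
  have hg1 : gAnti β 1 < 0 := by rw [gAnti_one]; norm_num
  have hM : (1 : ℝ) ≤ 10 / β := by rw [le_div_iff₀ h0]; linarith
  have hcont {s : Set ℝ} : ContinuousOn (gAnti β) s := (continuous_gAnti β).continuousOn
  obtain ⟨r, ⟨hr0, hr3⟩, hr⟩ :=
    intermediate_value_Ioo (by norm_num : (0 : ℝ) ≤ 1/3) hcont ⟨hg0, hg3⟩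
  obtain ⟨s, ⟨hs3, hs1⟩, hs⟩ :=
    intermediate_value_Ioo' (by norm_num : (1/3 : ℝ) ≤ 1) hcont ⟨hg1, hg3⟩
  obtain ⟨t, ⟨ht1, -⟩, ht⟩ :=
    intermediate_value_Ioo hM hcont ⟨hg1, gAnti_ten_div_pos h0 h1⟩
  have hroots (x : ℝ) (hx : gAnti β x = 0) : x = r ∨ x = s ∨ x = t := by
    have ha : 3*β^3 + 3*β^2 + 3*β ≠ 0 := by positivity
    have hform (z : ℝ) : gAnti β z = (3*β^3 + 3*β^2 + 3*β) * z^3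
        + -(5*β^3 + 7*β^2 + 4*β + 2) * z^2 + (2*β^3 + 5*β^2 + β + 1) * z + -β^2 := by
      unfold gAnti
      ring
    rw [hform] at hr hs ht hx
    rw [cubic_eq_mul_of_roots (by linarith : r < s).ne (by linarith : r < t).ne
      (by linarith : s < t).ne hr hs ht x] at hx
    simpa [ha, sub_eq_zero, or_assoc] using hx
  refine ⟨gAnti_zero β, hg0, gAnti_one_third β, hg3, hg1, ⟨r, ⟨⟨hr0, hr3⟩, hr⟩, ?_⟩,
    ⟨s, ⟨⟨hs3, hs1⟩, hs⟩, ?_⟩, ⟨t, ⟨ht1, ht⟩, ?_⟩, ?_⟩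
  · rintro y ⟨⟨hy0, hy3⟩, hy⟩
    rcases hroots y hy with h | h | h <;> linarith
  · rintro y ⟨⟨hy3, hy1⟩, hy⟩
    rcases hroots y hy with h | h | h <;> linarith
  · rintro y ⟨hy1, hy⟩
    rw [Set.mem_Ioi] at hy1
    rcases hroots y hy with h | h | h <;> linarith
  · intro x hx
    rcases hroots x hx with rfl | rfl | rfl
    · exact Or.inl (Or.inl ⟨hr0, hr3⟩)
    · exact Or.inl (Or.inr ⟨hs3, hs1⟩)
    · exact Or.inr ht1
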